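/- For every positive integer m and every real number β, the solution of the Duffing boundary value problem for (m, β) is unique: if (T₁, f₁) and (T₂, f₂) both solve the problem, then T₁ = T₂ and f₁(t) = f₂(t) for all t ∈ [-T₁, T₁]. -/

import Mathlib

open Real

/-- The Duffing boundary value problem for `(m, β)`: a time `T > 0` and a `C^∞` function
`f` with `f'' = -f³ + β·f` on `[-T, T]`, boundary values `f(±T) = 0`,
`f'(-T) = m`, `f'(T) = -m`, and `f > 0` on `(-T, T)`. -/
def IsDuffingSolution (m : ℕ) (β T : ℝ) (f : ℝ → ℝ) : Prop :=
  0 < T ∧ ContDiff ℝ (⊤ : ℕ∞) f ∧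
    (∀ t ∈ Set.Icc (-T) T, deriv (deriv f) t = -(f t) ^ 3 + β * f t) ∧
    f (-T) = 0 ∧ f T = 0 ∧ deriv f (-T) = (m : ℝ) ∧ deriv f T = -(m : ℝ) ∧
    (∀ t ∈ Set.Ioo (-T) T, 0 < f t)

/-!
The phase curve `(f, f')` of a solution is an orbit arc of the Duffing vector field
`(x, y) ↦ (y, -x³ + βx)` which leaves the point `(0, m)` and meets the line `x = 0` for the first
time when it ends: this is what positivity of `f` on the open interval says. The field is
autonomous and locally Lipschitz, so two orbit arcs issuing from the same point at the same time
agree for as long as both are defined. If one were shorter, the longer one would meet the line at an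
interior time; hence both arcs last equally long and coincide.
-/

open Set
open scoped Pointwise

section FirstHit

variable {E : Type*} [NormedAddCommGroup E] [NormedSpace ℝ E]
  {v : E → E} {x : E} {S : Set E} {a b a₁ b₁ a₂ b₂ : ℝ} {γ γ₁ γ₂ : ℝ → E}

theorem eqOn_Icc_of_isIntegralCurveOn_of_locallyLipschitz (hv : LocallyLipschitz v)
    (h₁ : IsIntegralCurveOn γ₁ (fun _ ↦ v) (Icc a b))
    (h₂ : IsIntegralCurveOn γ₂ (fun _ ↦ v) (Icc a b)) (ha : γ₁ a = γ₂ a) :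
    EqOn γ₁ γ₂ (Icc a b) := by
  have image_compact : IsCompact (γ₁ '' Icc a b ∪ γ₂ '' Icc a b) :=
    (isCompact_Icc.image_of_continuousOn h₁.continuousOn).union
      (isCompact_Icc.image_of_continuousOn h₂.continuousOn)
  obtain ⟨K, hK⟩ := hv.locallyLipschitzOn.exists_lipschitzOnWith_of_compact image_compact
  have right_deriv {γ : ℝ → E} (h : IsIntegralCurveOn γ (fun _ ↦ v) (Icc a b)) :
      ∀ t ∈ Ico a b, HasDerivWithinAt γ (v (γ t)) (Ici t) t := fun t ht ↦
    (h t (Ico_subset_Icc_self ht)).mono_of_mem_nhdsWithin (Icc_mem_nhdsGE_of_mem ht)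
  exact ODE_solution_unique_of_mem_Icc_right (fun _ _ ↦ hK)
    h₁.continuousOn (right_deriv h₁) (fun t ht ↦ .inl ⟨t, Ico_subset_Icc_self ht, rfl⟩)
    h₂.continuousOn (right_deriv h₂) (fun t ht ↦ .inr ⟨t, Ico_subset_Icc_self ht, rfl⟩) ha

/-- An orbit arc of the autonomous vector field `v` on `[a, b]` that issues from `x` and hits the
set `S` for the first time at its end. The starting point may lie in `S`, so that first returns
to `S` are covered. -/
structure IsFirstHitArc (v : E → E) (x : E) (S : Set E) (a b : ℝ) (γ : ℝ → E) : Prop where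
  lt : a < b
  isIntegralCurveOn : IsIntegralCurveOn γ (fun _ ↦ v) (Icc a b)
  apply_left : γ a = x
  apply_right_mem : γ b ∈ S
  apply_notMem : ∀ t ∈ Ioo a b, γ t ∉ S

namespace IsFirstHitArc

theorem comp_sub (h : IsFirstHitArc v x S a b γ) (c : ℝ) :
    IsFirstHitArc v x S (a + c) (b + c) (γ ∘ (· - c)) where
  lt := by linarith [h.lt]
  isIntegralCurveOn := by
    have translate : c +ᵥ Icc a b = Icc (a + c) (b + c) := by
      simp only [← image_vadd, vadd_eq_add, add_comm c, image_add_const_Icc]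
    exact translate ▸ h.isIntegralCurveOn.comp_sub c
  apply_left := by simpa using h.apply_left
  apply_right_mem := by simpa using h.apply_right_mem
  apply_notMem t ht := h.apply_notMem _ ⟨by linarith [ht.1], by linarith [ht.2]⟩

theorem eqOn_of_le (hv : LocallyLipschitz v) (h₁ : IsFirstHitArc v x S a b₁ γ₁)
    (h₂ : IsFirstHitArc v x S a b₂ γ₂) (hb : b₁ ≤ b₂) : EqOn γ₁ γ₂ (Icc a b₁) := by
  have subset : Icc a b₁ ⊆ Icc a b₂ := Icc_subset_Icc_right hb
  exact eqOn_Icc_of_isIntegralCurveOn_of_locallyLipschitz hv h₁.isIntegralCurveOn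
    (h₂.isIntegralCurveOn.mono subset) (h₁.apply_left.trans h₂.apply_left.symm)

theorem right_le (hv : LocallyLipschitz v) (h₁ : IsFirstHitArc v x S a b₁ γ₁)
    (h₂ : IsFirstHitArc v x S a b₂ γ₂) : b₂ ≤ b₁ := by
  by_contra! hlt
  have agree_at_hit : γ₁ b₁ = γ₂ b₁ := h₁.eqOn_of_le hv h₂ hlt.le (right_mem_Icc.2 h₁.lt.le)
  exact h₂.apply_notMem b₁ ⟨h₁.lt, hlt⟩ (agree_at_hit ▸ h₁.apply_right_mem)

theorem duration_eq (hv : LocallyLipschitz v) (h₁ : IsFirstHitArc v x S a₁ b₁ γ₁)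
    (h₂ : IsFirstHitArc v x S a₂ b₂ γ₂) : b₁ - a₁ = b₂ - a₂ := by
  have h₁' := h₁.comp_sub (-a₁)
  have h₂' := h₂.comp_sub (-a₂)
  rw [add_neg_cancel, ← sub_eq_add_neg] at h₁' h₂'
  exact le_antisymm (h₂'.right_le hv h₁') (h₁'.right_le hv h₂')

end IsFirstHitArc

theorem duffing_bvp_uniqueness_general {T₁ T₂ : ℝ} (hv : LocallyLipschitz v)
    (h₁ : IsFirstHitArc v x S (-T₁) T₁ γ₁) (h₂ : IsFirstHitArc v x S (-T₂) T₂ γ₂) :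
    T₁ = T₂ ∧ EqOn γ₁ γ₂ (Icc (-T₁) T₁) := by
  obtain rfl : T₁ = T₂ := by linarith [h₁.duration_eq hv h₂]
  exact ⟨rfl, h₁.eqOn_of_le hv h₂ le_rfl⟩

end FirstHit

section Duffing

/-- The vector field on the phase plane whose orbits are the curves `(f, f')` with
`f'' = -f³ + βf`. -/
def duffingField (β : ℝ) (p : ℝ × ℝ) : ℝ × ℝ :=
  (p.2, -p.1 ^ 3 + β * p.1)

theorem locallyLipschitz_duffingField (β : ℝ) : LocallyLipschitz (duffingField β) := by
  have smooth : ContDiff ℝ 1 (duffingField β) := by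
    unfold duffingField
    fun_prop
  exact smooth.locallyLipschitz

theorem isIntegralCurveOn_duffingField {β : ℝ} {f : ℝ → ℝ} {s : Set ℝ} (hf : Differentiable ℝ f)
    (hf' : Differentiable ℝ (deriv f))
    (ode : ∀ t ∈ s, deriv (deriv f) t = -(f t) ^ 3 + β * f t) :
    IsIntegralCurveOn (fun t ↦ (f t, deriv f t)) (fun _ ↦ duffingField β) s := fun t ht ↦
  have velocity : HasDerivAt (deriv f) (-(f t) ^ 3 + β * f t) t := ode t ht ▸ (hf' t).hasDerivAt
  ((hf t).hasDerivAt.prodMk velocity).hasDerivWithinAt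

theorem IsDuffingSolution.isFirstHitArc {m : ℕ} {β T : ℝ} {f : ℝ → ℝ}
    (h : IsDuffingSolution m β T f) :
    IsFirstHitArc (duffingField β) (0, (m : ℝ)) {p | p.1 = 0} (-T) T
      (fun t ↦ (f t, deriv f t)) := by
  obtain ⟨hT, hf, ode, left, right, slope_left, -, pos⟩ := h
  exact {
    lt := by linarith
    isIntegralCurveOn := isIntegralCurveOn_duffingField (hf.differentiable (by simp))
      ((contDiff_infty_iff_deriv.1 hf).2.differentiable (by simp)) ode
    apply_left := Prod.ext left slope_left
    apply_right_mem := right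
    apply_notMem := fun t ht ↦ (pos t ht).ne' }

end Duffing

/-- Uniqueness of solutions to the Duffing boundary value problem. -/
theorem duffing_bvp_uniqueness (m : ℕ) (hm : 0 < m) (β : ℝ)
    (T₁ T₂ : ℝ) (f₁ f₂ : ℝ → ℝ)
    (h₁ : IsDuffingSolution m β T₁ f₁) (h₂ : IsDuffingSolution m β T₂ f₂) :
    T₁ = T₂ ∧ ∀ t ∈ Set.Icc (-T₁) T₁, f₁ t = f₂ t := by
  obtain ⟨hT, agree⟩ := duffing_bvp_uniqueness_general (locallyLipschitz_duffingField β)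
    h₁.isFirstHitArc h₂.isFirstHitArc
  exact ⟨hT, fun t ht ↦ congrArg Prod.fst (agree ht)⟩
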